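/- arXiv:2605.19691 — 4 statements merged into one kernel-verified Lean document; each statement's English description precedes it below -/
import Mathlib

section
/- Let F be a finite field with q elements and let B₁,…,B_k ∈ F^{m×n} be a linearly independent family of matrices generating a column-nondegenerate matrix rank-metric code C = span_F{B₁,…,B_k}, with associated column-system S. Then Σ_{M ∈ C, M ≠ 0} (q^{n−rank(M)} − 1) = Σ_{X ∈ S, X ≠ 0} (q^{k−rank(X)} − 1). -/
open Matrix

section Defs

variable {K : Type*} [Field K]

/-- The row space of a matrix: the span of its rows in `K^b`. -/
noncomputable def rowSpace {a b : ℕ} (M : Matrix (Fin a) (Fin b) K) :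
    Submodule K (Fin b → K) :=
  Submodule.span K (Set.range fun i => M i)

/-- The column space of a matrix: the span of its columns in `K^a`. -/
noncomputable def colSpace {a b : ℕ} (M : Matrix (Fin a) (Fin b) K) :
    Submodule K (Fin a → K) :=
  Submodule.span K (Set.range fun j i => M i j)

/-- `Sc S U = {X ∈ S : colsp(X) ⊆ U}`, a subspace of the matrix space. -/
noncomputable def Sc {a b : ℕ} (S : Submodule K (Matrix (Fin a) (Fin b) K))
    (U : Submodule K (Fin a → K)) : Submodule K (Matrix (Fin a) (Fin b) K) where
  carrier := {X | X ∈ S ∧ colSpace X ≤ U}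
  add_mem' := by
    rintro X Y ⟨hXS, hXU⟩ ⟨hYS, hYU⟩
    refine ⟨S.add_mem hXS hYS, ?_⟩
    rw [colSpace, Submodule.span_le]
    rintro v ⟨j, rfl⟩
    have hx : (fun i => X i j) ∈ U := hXU (Submodule.subset_span ⟨j, rfl⟩)
    have hy : (fun i => Y i j) ∈ U := hYU (Submodule.subset_span ⟨j, rfl⟩)
    exact U.add_mem hx hy
  zero_mem' := by
    refine ⟨S.zero_mem, ?_⟩
    rw [colSpace, Submodule.span_le]
    rintro v ⟨j, rfl⟩
    exact U.zero_mem
  smul_mem' := by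
    rintro c X ⟨hXS, hXU⟩
    refine ⟨S.smul_mem c hXS, ?_⟩
    rw [colSpace, Submodule.span_le]
    rintro v ⟨j, rfl⟩
    exact U.smul_mem c (hXU (Submodule.subset_span ⟨j, rfl⟩))

/-- `Sr S U = {X ∈ S : rowsp(X) ⊆ U}`, a subspace of the matrix space. -/
noncomputable def Sr {a b : ℕ} (S : Submodule K (Matrix (Fin a) (Fin b) K))
    (U : Submodule K (Fin b → K)) : Submodule K (Matrix (Fin a) (Fin b) K) where
  carrier := {X | X ∈ S ∧ rowSpace X ≤ U}
  add_mem' := by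
    rintro X Y ⟨hXS, hXU⟩ ⟨hYS, hYU⟩
    refine ⟨S.add_mem hXS hYS, ?_⟩
    rw [rowSpace, Submodule.span_le]
    rintro v ⟨i, rfl⟩
    have hx : X i ∈ U := hXU (Submodule.subset_span ⟨i, rfl⟩)
    have hy : Y i ∈ U := hYU (Submodule.subset_span ⟨i, rfl⟩)
    exact U.add_mem hx hy
  zero_mem' := by
    refine ⟨S.zero_mem, ?_⟩
    rw [rowSpace, Submodule.span_le]
    rintro v ⟨i, rfl⟩
    exact U.zero_mem
  smul_mem' := by
    rintro c X ⟨hXS, hXU⟩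
    refine ⟨S.smul_mem c hXS, ?_⟩
    rw [rowSpace, Submodule.span_le]
    rintro v ⟨i, rfl⟩
    exact U.smul_mem c (hXU (Submodule.subset_span ⟨i, rfl⟩))

/-- Row support of a set of matrices: the sum of the row spaces of its elements. -/
noncomputable def rowSupport {a b : ℕ} (D : Submodule K (Matrix (Fin a) (Fin b) K)) :
    Submodule K (Fin b → K) :=
  ⨆ M ∈ D, rowSpace M

/-- Column support of a set of matrices: the sum of the column spaces of its elements. -/
noncomputable def colSupport {a b : ℕ} (D : Submodule K (Matrix (Fin a) (Fin b) K)) :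
    Submodule K (Fin a → K) :=
  ⨆ M ∈ D, colSpace M

/-- The hyperplane `u^⊥ = {v : ∑ i, u i * v i = 0}`. -/
noncomputable def perp {a : ℕ} (u : Fin a → K) : Submodule K (Fin a → K) where
  carrier := {v | ∑ i, u i * v i = 0}
  add_mem' := by
    intro v w hv hw
    simp only [Set.mem_setOf_eq, Pi.add_apply, mul_add, Finset.sum_add_distrib] at *
    simp [hv, hw]
  zero_mem' := by simp
  smul_mem' := by
    intro c v hv
    simp only [Set.mem_setOf_eq, Pi.smul_apply, smul_eq_mul] at *
    have : ∑ i, u i * (c * v i) = c * ∑ i, u i * v i := by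
      rw [Finset.mul_sum]; congr 1; ext i; ring
    simp [this, hv]

/-- The orthogonal complement `U^⊥ = {v : ∀ u ∈ U, ∑ i, u i * v i = 0}`. -/
noncomputable def perpSub {a : ℕ} (U : Submodule K (Fin a → K)) : Submodule K (Fin a → K) :=
  ⨅ u ∈ U, perp u

/-- The slices of the column-system: `(X l) i j = (B i) j l`. -/
def colSlices {m n k : ℕ} (B : Fin k → Matrix (Fin m) (Fin n) K) :
    Fin n → Matrix (Fin k) (Fin m) K :=
  fun l => Matrix.of fun i j => B i j l

/-- The slices of the row-system: `(Y j) l i = (B i) j l`. -/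
def rowSlices {m n k : ℕ} (B : Fin k → Matrix (Fin m) (Fin n) K) :
    Fin m → Matrix (Fin n) (Fin k) K :=
  fun j => Matrix.of fun l i => B i j l

/-- The linear map `u ↦ ∑ i, u i • B i` (i.e. `u ↦ m₁(T,u)`). -/
noncomputable def combMap {m n k : ℕ} (B : Fin k → Matrix (Fin m) (Fin n) K) :
    (Fin k → K) →ₗ[K] Matrix (Fin m) (Fin n) K where
  toFun u := ∑ i, u i • B i
  map_add' := by intro u v; simp [add_smul, Finset.sum_add_distrib]
  map_smul' := by intro c u; simp [smul_smul, Finset.smul_sum]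

/-- The `t`-th row-generalized rank weight. -/
noncomputable def dRow {a b : ℕ} (C : Submodule K (Matrix (Fin a) (Fin b) K)) (t : ℕ) : ℕ :=
  sInf {r | ∃ D : Submodule K (Matrix (Fin a) (Fin b) K),
    D ≤ C ∧ Module.finrank K D = t ∧ Module.finrank K (rowSupport D) = r}

/-- The `t`-th column-generalized rank weight. -/
noncomputable def dCol {a b : ℕ} (C : Submodule K (Matrix (Fin a) (Fin b) K)) (t : ℕ) : ℕ :=
  sInf {r | ∃ D : Submodule K (Matrix (Fin a) (Fin b) K),
    D ≤ C ∧ Module.finrank K D = t ∧ Module.finrank K (colSupport D) = r}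

end Defs

theorem Matrix.card_mulVec_eq_zero {F : Type*} [Field F] [Fintype F] [DecidableEq F]
    {ι κ : Type*} [Fintype ι] [Fintype κ] [DecidableEq κ] (M : Matrix ι κ F) :
    (Finset.univ.filter fun v : κ → F => M *ᵥ v = 0).card
      = Fintype.card F ^ (Fintype.card κ - M.rank) := by
  have hker : Module.finrank F (LinearMap.ker M.mulVecLin) = Fintype.card κ - M.rank := by
    have h := LinearMap.finrank_range_add_finrank_ker M.mulVecLin
    rw [Module.finrank_fintype_fun_eq_card] at h
    rw [Matrix.rank]
    omega
  rw [← hker, ← Nat.card_eq_fintype_card (α := F), ← Module.natCard_eq_pow_finrank,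
    ← Fintype.card_subtype, ← Nat.card_eq_fintype_card]
  exact Nat.card_congr (Equiv.refl _)

/-- Summing over the nonzero elements of a span amounts to summing over the nonzero coefficient
vectors of a linearly independent generating family. -/
theorem LinearIndependent.finsum_mem_span_diff_zero {F V ι A : Type*} [Field F] [Fintype F]
    [AddCommGroup V] [Module F V] [Fintype ι] [DecidableEq ι] [DecidableEq F] [AddCommMonoid A]
    {b : ι → V} (hb : LinearIndependent F b) (f : V → A) :
    ∑ᶠ x ∈ (Submodule.span F (Set.range b) : Set V) \ {0}, f x
      = ∑ u : ι → F with u ≠ 0, f (∑ i, u i • b i) := by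
  have hinj : Function.Injective (Fintype.linearCombination F b) :=
    hb.fintypeLinearCombination_injective
  have himage : (Submodule.span F (Set.range b) : Set V) \ {0}
      = Fintype.linearCombination F b '' ((Finset.univ.filter fun u : ι → F => u ≠ 0 :
        Finset (ι → F)) : Set (ι → F)) := by
    rw [← Fintype.range_linearCombination F b]
    ext x
    constructor
    · rintro ⟨⟨u, rfl⟩, hu⟩
      refine ⟨u, ?_, rfl⟩
      simp only [Finset.coe_filter, Finset.mem_univ, true_and, Set.mem_ofPred_eq]
      rintro rfl
      exact hu (map_zero _)
    · rintro ⟨u, hu, rfl⟩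
      simp only [Finset.coe_filter, Finset.mem_univ, true_and, Set.mem_ofPred_eq] at hu
      exact ⟨⟨u, rfl⟩, fun h => hu (hinj (h.trans (map_zero _).symm))⟩
  rw [himage, finsum_mem_image hinj.injOn, finsum_mem_coe_finset]
  rfl

theorem sum_smul_mulVec_eq_transpose_sum_colSlices_mulVec {K : Type*} [Field K] {m n k : ℕ}
    (B : Fin k → Matrix (Fin m) (Fin n) K) (u : Fin k → K) (v : Fin n → K) :
    (∑ i, u i • B i) *ᵥ v = (∑ l, v l • colSlices B l)ᵀ *ᵥ u := by
  ext j
  simp only [Matrix.mulVec, dotProduct, Matrix.transpose_apply, Matrix.sum_apply,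
    Matrix.smul_apply, smul_eq_mul, colSlices, Matrix.of_apply, Finset.sum_mul]
  rw [Finset.sum_comm]
  exact Finset.sum_congr rfl fun i _ => Finset.sum_congr rfl fun l _ => by ring

/-- The column slices of a column-nondegenerate code are linearly independent. -/
theorem linearIndependent_colSlices {K : Type*} [Field K] {m n k : ℕ}
    {B : Fin k → Matrix (Fin m) (Fin n) K}
    (hnd : rowSupport (Submodule.span K (Set.range B)) = ⊤) :
    LinearIndependent K (colSlices B) := by
  rw [Fintype.linearIndependent_iff]
  intro v hv
  have hle : rowSupport (Submodule.span K (Set.range B)) ≤ perp v := by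
    refine iSup₂_le fun M hM => ?_
    rw [rowSpace, Submodule.span_le]
    rintro _ ⟨j, rfl⟩
    rw [← Fintype.range_linearCombination K B] at hM
    obtain ⟨u, rfl⟩ := hM
    have h := sum_smul_mulVec_eq_transpose_sum_colSlices_mulVec B u v
    rw [hv, Matrix.transpose_zero, Matrix.zero_mulVec] at h
    have hj := congrFun h j
    rw [Matrix.mulVec, dotProduct_comm] at hj
    exact hj
  intro l
  have hl : Pi.single l 1 ∈ perp v := hle (hnd ▸ Submodule.mem_top)
  change ∑ i, v i * (Pi.single l 1 : Fin n → K) i = 0 at hl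
  simpa [Pi.single_apply] using hl

theorem Matrix.card_pow_sub_rank_sub_one {F : Type*} [Field F] [Fintype F] [DecidableEq F]
    {ι κ : Type*} [Fintype ι] [Fintype κ] [DecidableEq κ] (M : Matrix ι κ F) :
    (Fintype.card F : ℤ) ^ (Fintype.card κ - M.rank) - 1
      = ∑ v : κ → F with v ≠ 0, if M *ᵥ v = 0 then 1 else 0 := by
  have h := Finset.sum_erase_add (Finset.univ : Finset (κ → F))
    (fun v => if M *ᵥ v = 0 then (1 : ℤ) else 0) (Finset.mem_univ 0)
  rw [Finset.sum_boole _ Finset.univ, M.card_mulVec_eq_zero, if_pos (Matrix.mulVec_zero M)] at h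
  rw [Finset.filter_ne', eq_comm, eq_sub_iff_add_eq]
  exact_mod_cast h

/-- Delsarte-type identity: for a column-nondegenerate `[m×n,k]_q` code `C`
with associated column-system `S`,
`Σ_{M ∈ C, M ≠ 0} (q^{n−rk(M)} − 1) = Σ_{X ∈ S, X ≠ 0} (q^{k−rk(X)} − 1)`. -/
theorem stmt2 {F : Type*} [Field F] [Fintype F] {m n k : ℕ}
    (hm : 0 < m) (hn : 0 < n) (hk : 0 < k)
    (q : ℕ) (hq : q = Fintype.card F)
    (B : Fin k → Matrix (Fin m) (Fin n) F) (hB : LinearIndependent F B)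
    (C : Submodule F (Matrix (Fin m) (Fin n) F))
    (hC : C = Submodule.span F (Set.range B))
    (hnd : rowSupport C = ⊤)
    (S : Submodule F (Matrix (Fin k) (Fin m) F))
    (hS : S = Submodule.span F (Set.range (colSlices B))) :
    ∑ᶠ M ∈ (C : Set (Matrix (Fin m) (Fin n) F)) \ {0}, ((q : ℤ) ^ (n - M.rank) - 1)
      = ∑ᶠ X ∈ (S : Set (Matrix (Fin k) (Fin m) F)) \ {0}, ((q : ℤ) ^ (k - X.rank) - 1) := by
  classical
  subst hq hC hS
  rw [hB.finsum_mem_span_diff_zero, (linearIndependent_colSlices hnd).finsum_mem_span_diff_zero]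
  have hC (u : Fin k → F) := (∑ i, u i • B i).card_pow_sub_rank_sub_one
  have hS (v : Fin n → F) := (∑ l, v l • colSlices B l)ᵀ.card_pow_sub_rank_sub_one
  simp only [Fintype.card_fin, Matrix.rank_transpose] at hC hS
  simp only [hC, hS, sum_smul_mulVec_eq_transpose_sum_colSlices_mulVec]
  exact Finset.sum_comm
end

section
/- Let F be a finite field with q elements and let B₁,…,B_k ∈ F^{m×n} be a linearly independent family of matrices generating a column-nondegenerate matrix rank-metric code C = span_F{B₁,…,B_k}, with associated column-system S. For t ∈ {0,…,k} and r ∈ {0,…,n}, let A_r^{(t)}(C) denote the number of F-subspaces D ⊆ C with dim_F D = t and dim_F(Σ_{M∈D} rowsp(M)) = r. Then Σ_{r=0}^{n} A_r^{(t)}(C)·(q^{n−r} − 1) = Σ_{X ∈ S, X ≠ 0} N_t(k − rank(X)), where N_t(s) denotes the number of t-dimensional F-subspaces of F^s. -/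
open Matrix

section Helpers

variable {K : Type*} [Field K]

theorem mem_perpSub {a : ℕ} {U : Submodule K (Fin a → K)} {v : Fin a → K} :
    v ∈ perpSub U ↔ ∀ u ∈ U, u ⬝ᵥ v = 0 := by
  simp only [perpSub, Submodule.mem_iInf]
  rfl

theorem finrank_add_finrank_perpSub {a : ℕ} (U : Submodule K (Fin a → K)) :
    Module.finrank K U + Module.finrank K (perpSub U) = a := by
  have h : perpSub U =
      (U.map (dotProductEquiv K (Fin a)).toLinearMap).dualCoannihilator := by
    ext v
    simp only [mem_perpSub, Submodule.mem_dualCoannihilator, Submodule.mem_map,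
      forall_exists_index, and_imp, forall_apply_eq_imp_iff₂]
    rfl
  have key := Subspace.finrank_add_finrank_dualCoannihilator_eq
    (U.map (dotProductEquiv K (Fin a)).toLinearMap)
  rw [LinearEquiv.finrank_map_eq, Module.finrank_fin_fun] at key
  rw [h, key]

theorem mem_perpSub_rowSupport {a b : ℕ} {D : Submodule K (Matrix (Fin a) (Fin b) K)}
    {v : Fin b → K} : v ∈ perpSub (rowSupport D) ↔ ∀ M ∈ D, M *ᵥ v = 0 := by
  constructor
  · intro h M hM
    funext i
    exact mem_perpSub.1 h _ (Submodule.mem_iSup_of_mem M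
      (Submodule.mem_iSup_of_mem hM (Submodule.subset_span ⟨i, rfl⟩)))
  · intro h
    have hle : rowSupport D ≤ perp v := by
      refine iSup₂_le fun M hM => Submodule.span_le.2 ?_
      rintro _ ⟨i, rfl⟩
      exact (dotProduct_comm v (M i)).trans (congrFun (h M hM) i)
    exact mem_perpSub.2 fun u hu => (dotProduct_comm u v).trans (hle hu)

theorem range_combMap {m n k : ℕ} (B : Fin k → Matrix (Fin m) (Fin n) K) :
    LinearMap.range (combMap B) = Submodule.span K (Set.range B) := by
  ext M
  rw [Submodule.mem_span_range_iff_exists_fun]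
  rfl

theorem combMap_injective {m n k : ℕ} {B : Fin k → Matrix (Fin m) (Fin n) K}
    (hB : LinearIndependent K B) : Function.Injective (combMap B) := by
  refine (injective_iff_map_eq_zero _).2 fun u hu => funext ?_
  exact Fintype.linearIndependent_iff.1 hB u hu

theorem combMap_mulVec {m n k : ℕ} (B : Fin k → Matrix (Fin m) (Fin n) K)
    (u : Fin k → K) (v : Fin n → K) :
    combMap B u *ᵥ v = u ᵥ* combMap (colSlices B) v := by
  ext j
  simp only [combMap, colSlices, LinearMap.coe_mk, AddHom.coe_mk, mulVec, vecMul, dotProduct,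
    Matrix.sum_apply, Matrix.smul_apply, Matrix.of_apply, smul_eq_mul, Finset.sum_mul,
    Finset.mul_sum]
  rw [Finset.sum_comm]
  exact Finset.sum_congr rfl fun _ _ => Finset.sum_congr rfl fun _ _ => by ring

theorem combMap_colSlices_injective {m n k : ℕ} {B : Fin k → Matrix (Fin m) (Fin n) K}
    (hnd : rowSupport (Submodule.span K (Set.range B)) = ⊤) :
    Function.Injective (combMap (colSlices B)) := by
  refine (injective_iff_map_eq_zero _).2 fun v hv => ?_
  have h : v ∈ perpSub (rowSupport (Submodule.span K (Set.range B))) := by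
    refine mem_perpSub_rowSupport.2 fun M hM => ?_
    rw [← range_combMap] at hM
    obtain ⟨u, rfl⟩ := hM
    rw [combMap_mulVec, hv, vecMul_zero]
  rw [hnd, mem_perpSub] at h
  exact dotProduct_eq_zero v fun w => (dotProduct_comm v w).trans (h w trivial)

/-- The subcode of `span B` consisting of the codewords that annihilate `v`. -/
noncomputable def annihilatedSubcode {m n k : ℕ} (B : Fin k → Matrix (Fin m) (Fin n) K)
    (v : Fin n → K) : Submodule K (Matrix (Fin m) (Fin n) K) :=
  (LinearMap.ker (combMap (colSlices B) v)ᵀ.mulVecLin).map (combMap B)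

theorem le_annihilatedSubcode_iff {m n k : ℕ} {B : Fin k → Matrix (Fin m) (Fin n) K}
    {v : Fin n → K} {D : Submodule K (Matrix (Fin m) (Fin n) K)} :
    D ≤ annihilatedSubcode B v ↔
      D ≤ Submodule.span K (Set.range B) ∧ ∀ M ∈ D, M *ᵥ v = 0 := by
  have hmem : ∀ M, M ∈ annihilatedSubcode B v ↔
      M ∈ Submodule.span K (Set.range B) ∧ M *ᵥ v = 0 := by
    intro M
    rw [← range_combMap]
    constructor
    · rintro ⟨u, hu, rfl⟩
      refine ⟨⟨u, rfl⟩, ?_⟩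
      rw [combMap_mulVec, ← mulVec_transpose]
      exact hu
    · rintro ⟨⟨u, rfl⟩, hu⟩
      refine ⟨u, ?_, rfl⟩
      rw [combMap_mulVec, ← mulVec_transpose] at hu
      exact hu
  exact ⟨fun h => ⟨fun M hM => ((hmem M).1 (h hM)).1, fun M hM => ((hmem M).1 (h hM)).2⟩,
    fun h M hM => (hmem M).2 ⟨h.1 hM, h.2 M hM⟩⟩

theorem finrank_annihilatedSubcode {m n k : ℕ} {B : Fin k → Matrix (Fin m) (Fin n) K}
    (hB : LinearIndependent K B) (v : Fin n → K) :
    Module.finrank K (annihilatedSubcode B v) = k - (combMap (colSlices B) v).rank := by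
  have h := (combMap (colSlices B) v)ᵀ.mulVecLin.finrank_range_add_finrank_ker
  rw [Module.finrank_fin_fun] at h
  rw [annihilatedSubcode,
    ← (Submodule.equivMapOfInjective _ (combMap_injective hB) _).finrank_eq, ← Matrix.rank_transpose, Matrix.rank]
  omega

theorem card_subspaces_le {V : Type*} [AddCommGroup V] [Module K V] [FiniteDimensional K V]
    (E : Submodule K V) (t : ℕ) :
    Nat.card {D : Submodule K V // D ≤ E ∧ Module.finrank K D = t} =
      Nat.card {W : Submodule K (Fin (Module.finrank K E) → K) // Module.finrank K W = t} := by
  let e : (Fin (Module.finrank K E) → K) ≃ₗ[K] E := (Module.finBasis K E).equivFun.symm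
  let f : (Fin (Module.finrank K E) → K) →ₗ[K] V := E.subtype ∘ₗ e.toLinearMap
  have hf : Function.Injective f := E.injective_subtype.comp e.injective
  have hr : LinearMap.range f = E := by
    simp [f, LinearMap.range_comp]
  have hfin : ∀ W : Submodule K (Fin (Module.finrank K E) → K),
      Module.finrank K (W.map f) = Module.finrank K W :=
    fun W => (Submodule.equivMapOfInjective f hf W).finrank_eq.symm
  have hmap : ∀ D ≤ E, (D.comap f).map f = D :=
    fun D hD => Submodule.map_comap_eq_self (hD.trans hr.ge)
  exact Nat.card_congr
    { toFun := fun D => ⟨D.1.comap f, by rw [← hfin, hmap _ D.2.1, D.2.2]⟩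
      invFun := fun W =>
        ⟨W.1.map f, (LinearMap.map_le_range (f := f)).trans hr.le, (hfin _).trans W.2⟩
      left_inv := fun D => Subtype.ext (hmap _ D.2.1)
      right_inv := fun W => Subtype.ext (Submodule.comap_map_eq_of_injective hf W.1) }

theorem card_ne_zero_mem_perpSub [Fintype K] [DecidableEq K] {a : ℕ}
    (U : Submodule K (Fin a → K)) [DecidablePred (· ∈ perpSub U)] :
    (((Finset.univ.filter fun v : Fin a → K => v ≠ 0).filter (· ∈ perpSub U)).card : ℤ) =
      (Fintype.card K : ℤ) ^ (a - Module.finrank K U) - 1 := by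
  have hcard : (Finset.univ.filter (· ∈ perpSub U)).card =
      Fintype.card K ^ (a - Module.finrank K U) := by
    have h := finrank_add_finrank_perpSub U
    rw [← Fintype.card_subtype, show a - Module.finrank K U = Module.finrank K (perpSub U) by omega]
    exact Module.card_eq_pow_finrank (K := K) (V := perpSub U)
  have herase : (Finset.univ.filter fun v : Fin a → K => v ≠ 0).filter (· ∈ perpSub U) =
      (Finset.univ.filter (· ∈ perpSub U)).erase 0 := by
    ext v
    simp
  have hmem : (0 : Fin a → K) ∈ Finset.univ.filter (· ∈ perpSub U) := by simp
  rw [herase, Finset.cast_card_erase_of_mem hmem, hcard]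
  push_cast
  rfl

end Helpers

/-- Higher-order Delsarte-type identities. For a column-nondegenerate
`[m×n,k]_q` code `C` with associated column-system `S` and any `t ≤ k`,
`Σ_{r=0}^{n} A_r^{(t)}(C)·(q^{n−r}−1) = Σ_{X ∈ S, X≠0} N_t(k − rk X)`, where `A_r^{(t)}(C)`
counts `t`-dimensional subcodes with row support of dimension `r`, and `N_t(s)` is the
number of `t`-dimensional subspaces of `F^s`. -/
theorem stmt3 {F : Type*} [Field F] [Fintype F] {m n k : ℕ}
    (hm : 0 < m) (hn : 0 < n) (hk : 0 < k)
    (q : ℕ) (hq : q = Fintype.card F)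
    (B : Fin k → Matrix (Fin m) (Fin n) F) (hB : LinearIndependent F B)
    (C : Submodule F (Matrix (Fin m) (Fin n) F))
    (hC : C = Submodule.span F (Set.range B))
    (hnd : rowSupport C = ⊤)
    (S : Submodule F (Matrix (Fin k) (Fin m) F))
    (hS : S = Submodule.span F (Set.range (colSlices B)))
    (t : ℕ) (ht : t ≤ k) :
    ∑ r ∈ Finset.range (n + 1),
        (Nat.card {D : Submodule F (Matrix (Fin m) (Fin n) F) //
            D ≤ C ∧ Module.finrank F D = t ∧ Module.finrank F (rowSupport D) = r} : ℤ)
          * ((q : ℤ) ^ (n - r) - 1)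
      = ∑ᶠ X ∈ (S : Set (Matrix (Fin k) (Fin m) F)) \ {0},
          (Nat.card {W : Submodule F (Fin (k - X.rank) → F) //
              Module.finrank F W = t} : ℤ) := by
  classical
  subst hq hC hS
  let C := Submodule.span F (Set.range B)
  have : Fintype (Submodule F (Matrix (Fin m) (Fin n) F)) := Fintype.ofFinite _
  let T : Finset (Submodule F (Matrix (Fin m) (Fin n) F)) :=
    Finset.univ.filter fun D => D ≤ C ∧ Module.finrank F D = t
  let V : Finset (Fin n → F) := Finset.univ.filter fun v => v ≠ 0
  let R : Submodule F (Matrix (Fin m) (Fin n) F) → (Fin n → F) → Prop :=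
    fun D v => v ∈ perpSub (rowSupport D)
  have hleft : ∑ r ∈ Finset.range (n + 1),
      (Nat.card {D : Submodule F (Matrix (Fin m) (Fin n) F) //
          D ≤ C ∧ Module.finrank F D = t ∧ Module.finrank F (rowSupport D) = r} : ℤ)
        * ((Fintype.card F : ℤ) ^ (n - r) - 1)
      = ∑ D ∈ T, ((V.bipartiteAbove R D).card : ℤ) := by
    have hmaps : ∀ D ∈ T, Module.finrank F (rowSupport D) ∈ Finset.range (n + 1) := fun D _ => by
      have h := finrank_add_finrank_perpSub (rowSupport D)
      rw [Finset.mem_range]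
      omega
    rw [← Finset.sum_fiberwise_of_maps_to hmaps]
    refine Finset.sum_congr rfl fun r _ => ?_
    have hterm : ∀ D ∈ T.filter fun D => Module.finrank F (rowSupport D) = r,
        ((V.bipartiteAbove R D).card : ℤ) = (Fintype.card F : ℤ) ^ (n - r) - 1 := by
      intro D hD
      rw [← (Finset.mem_filter.1 hD).2]
      exact card_ne_zero_mem_perpSub (rowSupport D)
    rw [Finset.sum_congr rfl hterm, Finset.sum_const, nsmul_eq_mul, Nat.card_eq_fintype_card,
      Fintype.card_subtype, Finset.filter_filter]
    simp only [and_assoc]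
  have hright : ∀ v, ((T.bipartiteBelow R v).card : ℤ) =
      Nat.card {W : Submodule F (Fin (k - (combMap (colSlices B) v).rank) → F) //
        Module.finrank F W = t} := by
    intro v
    rw [← finrank_annihilatedSubcode hB v, ← card_subspaces_le, Nat.card_eq_fintype_card,
      Fintype.card_subtype]
    congr 2
    ext D
    simp only [T, R, C, Finset.bipartiteBelow, Finset.mem_filter, Finset.mem_univ, true_and,
      le_annihilatedSubcode_iff, mem_perpSub_rowSupport]
    tauto
  have hinj := combMap_colSlices_injective hnd
  have hbij : Set.BijOn (combMap (colSlices B)) (V : Set (Fin n → F))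
      ((Submodule.span F (Set.range (colSlices B)) : Set (Matrix (Fin k) (Fin m) F)) \ {0}) := by
    refine ⟨fun v hv => ⟨?_, ?_⟩, hinj.injOn, ?_⟩
    · rw [← range_combMap]
      exact ⟨v, rfl⟩
    · exact (map_ne_zero_iff _ hinj).2 (Finset.mem_filter.1 hv).2
    · rintro X ⟨hX, hX0⟩
      rw [← range_combMap] at hX
      obtain ⟨v, rfl⟩ := hX
      exact ⟨v, by simpa [V] using (map_ne_zero_iff _ hinj).1 hX0, rfl⟩
  rw [hleft, ← finsum_mem_eq_of_bijOn _ hbij fun v _ => hright v, finsum_mem_coe_finset]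
  exact_mod_cast Finset.sum_card_bipartiteAbove_eq_sum_card_bipartiteBelow R
end

section
/- Let F be a finite field with q elements and let B₁,…,B_k ∈ F^{m×n} be a linearly independent family of matrices generating a matrix rank-metric code C = span_F{B₁,…,B_k} that is column-nondegenerate and row-nondegenerate and faithful (every nonzero element of the associated column-system S has rank m); note that faithfulness forces k ≥ max{m,n}. Then, as integers, (q − 1) · |{M ∈ C : rank(M) = min{m,n}}| ≥ q(q^k − 1) − (q^{k−max{m,n}} − 1)(q^{min{m,n}} − 1) − (q^k − 1). -/
open Matrix

/-- A matrix has full column rank if and only if its kernel is trivial. -/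
theorem rank_eq_width_iff {K : Type*} [Field K] {a b : ℕ} (M : Matrix (Fin a) (Fin b) K) :
    M.rank = b ↔ ∀ v, M *ᵥ v = 0 → v = 0 := by
  have hrn := LinearMap.finrank_range_add_finrank_ker M.mulVecLin
  rw [Module.finrank_fin_fun] at hrn
  have hker : (∀ v, M *ᵥ v = 0 → v = 0) ↔ LinearMap.ker M.mulVecLin = ⊥ := by
    rw [LinearMap.ker_eq_bot']
    rfl
  rw [hker, ← Submodule.finrank_eq_zero, Matrix.rank]
  omega

/-- Evaluation of the matrices of `C` at a fixed vector `v`. -/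
def evalAt {K : Type*} [Field K] {m n : ℕ} (C : Submodule K (Matrix (Fin m) (Fin n) K))
    (v : Fin n → K) : C →ₗ[K] (Fin m → K) where
  toFun M := M.1 *ᵥ v
  map_add' M N := by simp [Matrix.add_mulVec]
  map_smul' c M := by simp [Matrix.smul_mulVec]

/-- If the forms `M ↦ w ⬝ᵥ M *ᵥ v` are nonzero on `C` for all `w ≠ 0`, then evaluation at `v` maps
`C` onto `K^m`. -/
theorem evalAt_range_eq_top {K : Type*} [Field K] {m n : ℕ}
    (C : Submodule K (Matrix (Fin m) (Fin n) K)) (v : Fin n → K)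
    (h : ∀ w : Fin m → K, w ≠ 0 → ∃ M ∈ C, w ⬝ᵥ M *ᵥ v ≠ 0) :
    LinearMap.range (evalAt C v) = ⊤ := by
  by_contra hne
  obtain ⟨f, hf, hle⟩ := Submodule.exists_le_ker_of_lt_top _ (lt_top_iff_ne_top.mpr hne)
  obtain ⟨w, rfl⟩ := (dotProductEquiv K (Fin m)).surjective f
  have hw : w ≠ 0 := by
    rintro rfl
    exact hf (map_zero _)
  obtain ⟨M, hM, hMv⟩ := h w hw
  exact hMv (hle ⟨⟨M, hM⟩, rfl⟩)

/-- The number of matrices in `C` annihilating `v`, when evaluation at `v` is onto. -/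
theorem card_filter_mulVec_eq_zero {F : Type*} [Field F] [Fintype F] [DecidableEq F] {m n : ℕ}
    (C : Submodule F (Matrix (Fin m) (Fin n) F)) [Fintype C] (v : Fin n → F)
    (h : LinearMap.range (evalAt C v) = ⊤) :
    (Finset.univ.filter fun M : C => M.1 *ᵥ v = 0).card =
      Fintype.card F ^ (Module.finrank F C - m) := by
  classical
  have hrn := LinearMap.finrank_range_add_finrank_ker (evalAt C v)
  rw [h, finrank_top, Module.finrank_fin_fun] at hrn
  have hcard := Module.natCard_eq_pow_finrank (K := F) (V := LinearMap.ker (evalAt C v))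
  rw [show Module.finrank F C - m = Module.finrank F (LinearMap.ker (evalAt C v)) by omega,
    ← Nat.card_eq_fintype_card, ← hcard, ← Fintype.card_subtype, ← Nat.card_eq_fintype_card]
  rfl

/-- A matrix without full column rank annihilates at least `q - 1` nonzero vectors. -/
theorem card_sub_one_le_card_filter {F : Type*} [Field F] [Fintype F] [DecidableEq F] {m n : ℕ}
    (M : Matrix (Fin m) (Fin n) F) (hM : M.rank ≠ n) :
    Fintype.card F - 1 ≤ (Finset.univ.filter fun v : Fin n → F => v ≠ 0 ∧ M *ᵥ v = 0).card := by
  rw [Ne, rank_eq_width_iff] at hM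
  push Not at hM
  obtain ⟨v, hv, hv0⟩ := hM
  rw [← Finset.card_univ, ← Finset.card_erase_of_mem (Finset.mem_univ (0 : F))]
  refine Finset.card_le_card_of_injOn (fun c => c • v) ?_ ?_
  · intro c hc
    have hc0 : c ≠ 0 := by simpa using hc
    simp [hc0, hv0, Matrix.mulVec_smul, hv]
  · intro c _ d _ hcd
    exact smul_left_injective F hv0 hcd

/-- The number of nonzero vectors of `F^n`. -/
theorem card_filter_ne_zero (F : Type*) [Field F] [Fintype F] [DecidableEq F] (n : ℕ) :
    ((Finset.univ.filter fun v : Fin n → F => v ≠ 0).card : ℤ) = (Fintype.card F : ℤ) ^ n - 1 := by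
  rw [Finset.filter_ne', Finset.card_erase_of_mem (Finset.mem_univ _), Finset.card_univ,
    Fintype.card_fun, Fintype.card_fin, Nat.cast_sub (Nat.one_le_pow _ _ Fintype.card_pos)]
  simp

/-- Lower bound for the number of matrices of full column rank in a code on which all the forms
`M ↦ w ⬝ᵥ M *ᵥ v` with `v, w ≠ 0` are nonzero. -/
theorem full_column_rank_count {F : Type*} [Field F] [Fintype F] {m n : ℕ} (hn : 0 < n)
    (C : Submodule F (Matrix (Fin m) (Fin n) F))
    (h : ∀ w v, w ≠ 0 → v ≠ 0 → ∃ M ∈ C, w ⬝ᵥ M *ᵥ v ≠ 0) :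
    ((Fintype.card F : ℤ) - 1) * ((Fintype.card F : ℤ) ^ Module.finrank F C - 1)
        - ((Fintype.card F : ℤ) ^ n - 1)
          * ((Fintype.card F : ℤ) ^ (Module.finrank F C - m) - 1)
      ≤ ((Fintype.card F : ℤ) - 1) *
        (Nat.card {M : Matrix (Fin m) (Fin n) F // M ∈ C ∧ M.rank = n} : ℤ) := by
  classical
  set q := Fintype.card F
  have : Fintype C := Fintype.ofFinite C
  let kerCard (M : C) : ℕ := (Finset.univ.filter fun v : Fin n → F => v ≠ 0 ∧ M.1 *ᵥ v = 0).card
  have hcount : ∑ M : C, (kerCard M : ℤ) =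
      ((q : ℤ) ^ n - 1) * (q : ℤ) ^ (Module.finrank F C - m) := by
    have hswap : ∑ M : C, kerCard M = ∑ v ∈ Finset.univ.filter (fun v : Fin n → F => v ≠ 0),
        (Finset.univ.filter fun M : C => M.1 *ᵥ v = 0).card := by
      simp only [kerCard, ← Finset.filter_filter, Finset.card_filter _ (Finset.filter _ _),
        Finset.card_filter _ (Finset.univ : Finset C)]
      exact Finset.sum_comm
    rw [← Nat.cast_sum, hswap, Finset.sum_congr rfl fun v hv => card_filter_mulVec_eq_zero C v
      (evalAt_range_eq_top C v fun w hw => h w v hw (Finset.mem_filter.mp hv).2)]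
    rw [Finset.sum_const, smul_eq_mul, Nat.cast_mul, card_filter_ne_zero, Nat.cast_pow]
  have hpoint (M : C) : ((q : ℤ) - 1) + (if M = 0 then ((q : ℤ) ^ n - 1) - ((q : ℤ) - 1) else 0) ≤
      kerCard M + ((q : ℤ) - 1) * (if M.1.rank = n then 1 else 0) := by
    by_cases hM : M = 0
    · subst hM
      have hker : (kerCard 0 : ℤ) = (q : ℤ) ^ n - 1 := by
        simp only [kerCard, ← card_filter_ne_zero, q]
        simp
      have hne : ¬ (0 : ℕ) = n := by omega
      simp [hker, hne]
    · by_cases hr : M.1.rank = n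
      · simp [hM, hr]
      · have := card_sub_one_le_card_filter M.1 hr
        simp only [hM, hr, if_false, kerCard]
        omega
  have hsum := Finset.sum_le_sum fun M (_ : M ∈ (Finset.univ : Finset C)) => hpoint M
  have hfull : (Nat.card {M : Matrix (Fin m) (Fin n) F // M ∈ C ∧ M.rank = n} : ℤ) =
      ∑ M : C, if M.1.rank = n then 1 else 0 := by
    rw [Finset.sum_boole, ← Fintype.card_subtype, ← Nat.card_eq_fintype_card]
    exact congrArg _ (Nat.card_congr
      (Equiv.subtypeSubtypeEquivSubtypeInter (· ∈ C) fun M => M.rank = n).symm)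
  have hcardC : (Fintype.card C : ℤ) = (q : ℤ) ^ Module.finrank F C := by
    rw [Module.card_eq_pow_finrank (K := F) (V := C), Nat.cast_pow]
  simp only [Finset.sum_add_distrib, Finset.sum_const, Finset.card_univ, nsmul_eq_mul, hcardC,
    Finset.sum_ite_eq', Finset.mem_univ, if_true, hcount, ← Finset.mul_sum, ← hfull] at hsum
  linarith

/-- In a faithful column-nondegenerate code all the forms `M ↦ w ⬝ᵥ M *ᵥ v` with `v, w ≠ 0` are
nonzero. -/
theorem exists_dotProduct_mulVec_ne_zero {K : Type*} [Field K] {m n k : ℕ}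
    (B : Fin k → Matrix (Fin m) (Fin n) K)
    (hcolnd : rowSupport (Submodule.span K (Set.range B)) = ⊤)
    (hfaithful : ∀ X ∈ Submodule.span K (Set.range (colSlices B)), X ≠ 0 → X.rank = m)
    (w : Fin m → K) (v : Fin n → K) (hw : w ≠ 0) (hv : v ≠ 0) :
    ∃ M ∈ Submodule.span K (Set.range B), w ⬝ᵥ M *ᵥ v ≠ 0 := by
  let X : Matrix (Fin k) (Fin m) K := ∑ l, v l • colSlices B l
  have hXS : X ∈ Submodule.span K (Set.range (colSlices B)) :=
    Submodule.sum_mem _ fun l _ => Submodule.smul_mem _ _ (Submodule.subset_span ⟨l, rfl⟩)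
  have hX (i : Fin k) (j : Fin m) : X i j = (B i *ᵥ v) j := by
    simp only [X, Matrix.sum_apply, Matrix.smul_apply, colSlices, Matrix.of_apply, smul_eq_mul,
      Matrix.mulVec, dotProduct]
    exact Finset.sum_congr rfl fun l _ => mul_comm _ _
  have hX0 : X ≠ 0 := by
    intro h0
    have hB (i : Fin k) : B i *ᵥ v = 0 := funext fun j => by rw [← hX, h0]; rfl
    have hspan : ∀ M ∈ Submodule.span K (Set.range B), M *ᵥ v = 0 := by
      intro M hM
      induction hM using Submodule.span_induction with
      | mem M hM => obtain ⟨i, rfl⟩ := hM; exact hB i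
      | zero => exact Matrix.zero_mulVec v
      | add M N _ _ hM hN => rw [Matrix.add_mulVec, hM, hN, add_zero]
      | smul c M _ hM => rw [Matrix.smul_mulVec, hM, smul_zero]
    have hle : rowSupport (Submodule.span K (Set.range B)) ≤ perp v := by
      refine iSup₂_le fun M hM => Submodule.span_le.mpr ?_
      rintro _ ⟨i, rfl⟩
      have hi := congrFun (hspan M hM) i
      rw [Matrix.mulVec, dotProduct_comm] at hi
      exact hi
    rw [hcolnd] at hle
    refine hv (funext fun l => ?_)
    have hl : v ⬝ᵥ Pi.single l 1 = 0 := hle Submodule.mem_top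
    simpa using hl
  have hinj := (rank_eq_width_iff X).mp (hfaithful X hXS hX0)
  obtain ⟨i, hi⟩ := Function.ne_iff.mp fun h0 => hw (hinj w h0)
  refine ⟨B i, Submodule.subset_span ⟨i, rfl⟩, fun h0 => hi ?_⟩
  rw [dotProduct_comm] at h0
  rw [Matrix.mulVec, funext (hX i)]
  exact h0

/-- For a faithful (column- and row-nondegenerate) `[m×n,k]_q` code `C`,
`(q−1)·|{M ∈ C : rk(M) = min{m,n}}| ≥ q(q^k−1) − (q^{k−max{m,n}}−1)(q^{min{m,n}}−1) − (q^k−1)`. -/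
theorem stmt12 {F : Type*} [Field F] [Fintype F] {m n k : ℕ}
    (hm : 0 < m) (hn : 0 < n) (hk : max m n ≤ k)
    (q : ℕ) (hq : q = Fintype.card F)
    (B : Fin k → Matrix (Fin m) (Fin n) F) (hB : LinearIndependent F B)
    (C : Submodule F (Matrix (Fin m) (Fin n) F))
    (hC : C = Submodule.span F (Set.range B))
    (hcolnd : rowSupport C = ⊤) (hrownd : colSupport C = ⊤)
    (S : Submodule F (Matrix (Fin k) (Fin m) F))
    (hS : S = Submodule.span F (Set.range (colSlices B)))
    (hfaithful : ∀ X ∈ S, X ≠ 0 → X.rank = m) :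
    ((q : ℤ) - 1) *
        (Nat.card {M : Matrix (Fin m) (Fin n) F // M ∈ C ∧ M.rank = min m n} : ℤ)
      ≥ (q : ℤ) * ((q : ℤ) ^ k - 1)
          - ((q : ℤ) ^ (k - max m n) - 1) * ((q : ℤ) ^ (min m n) - 1)
          - ((q : ℤ) ^ k - 1) := by
  subst hq hC hS
  have hform := exists_dotProduct_mulVec_ne_zero B hcolnd hfaithful
  have hfin : Module.finrank F (Submodule.span F (Set.range B)) = k := by
    rw [finrank_span_eq_card hB, Fintype.card_fin]
  set C := Submodule.span F (Set.range B)
  rcases le_total n m with hnm | hmn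
  · have hcount := full_column_rank_count hn C hform
    rw [hfin] at hcount
    rw [min_eq_right hnm, max_eq_left hnm]
    linarith
  · let e := Matrix.transposeLinearEquiv (Fin m) (Fin n) F F
    have hcount := full_column_rank_count hm (C.map e.toLinearMap) fun w v hw hv => by
      obtain ⟨M, hM, hne⟩ := hform v w hv hw
      refine ⟨Mᵀ, Submodule.mem_map_of_mem (f := e.toLinearMap) hM, ?_⟩
      rwa [Matrix.mulVec_transpose, dotProduct_comm, ← Matrix.dotProduct_mulVec]
    have hcard : Nat.card {M // M ∈ C.map e.toLinearMap ∧ M.rank = m} =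
        Nat.card {M // M ∈ C ∧ M.rank = m} := by
      refine (Nat.card_congr (e.toEquiv.subtypeEquiv fun M => ?_)).symm
      refine and_congr ?_ ?_
      · exact (Submodule.mem_map_equiv (e := e) (x := e M) C |>.trans (by simp)).symm
      · exact iff_of_eq (congrArg (· = m) (Matrix.rank_transpose M).symm)
    rw [LinearEquiv.finrank_map_eq, hfin, hcard] at hcount
    rw [min_eq_left hmn, max_eq_right hmn]
    linarith
end

section
/- Let F be a finite field and let C ⊆ F^{m×n} be an F-subspace with dim_F C = k ≥ 1 that is a one-weight code: there is d ≥ 1 such that every nonzero M ∈ C has rank(M) = d. Then k ≤ m + n − d. -/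
open Matrix

/-- Double counting of the pairs `(v, w)` with `f v w = 0`. -/
theorem sum_card_ker_eq_sum_card_ker_flip {F V W U : Type*} [Field F] [AddCommGroup V]
    [Module F V] [AddCommGroup W] [Module F W] [AddCommGroup U] [Module F U]
    [Fintype V] [Fintype W] (f : V →ₗ[F] W →ₗ[F] U) :
    ∑ v, Nat.card (LinearMap.ker (f v)) = ∑ w, Nat.card (LinearMap.ker (f.flip w)) := by
  classical
  have card_ker (v : V) :
      Nat.card (LinearMap.ker (f v)) = ∑ w, if f v w = 0 then 1 else 0 := by
    simp [Nat.card_eq_fintype_card, Fintype.card_subtype]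
  have card_ker_flip (w : W) :
      Nat.card (LinearMap.ker (f.flip w)) = ∑ v, if f v w = 0 then 1 else 0 := by
    simp [Nat.card_eq_fintype_card, Fintype.card_subtype]
  simp only [card_ker, card_ker_flip]
  exact Finset.sum_comm

/-- The kernel of a linear map over a finite field has cardinality divisible by
`|F| ^ (dim V - dim U)`. -/
theorem pow_finrank_sub_dvd_card_ker {F V U : Type*} [Field F] [Finite F] [AddCommGroup V]
    [Module F V] [AddCommGroup U] [Module F U] [FiniteDimensional F V] [FiniteDimensional F U]
    (g : V →ₗ[F] U) :
    Nat.card F ^ (Module.finrank F V - Module.finrank F U) ∣ Nat.card (LinearMap.ker g) := by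
  rw [Module.natCard_eq_pow_finrank (K := F) (V := LinearMap.ker g)]
  apply pow_dvd_pow
  have h₁ := g.finrank_range_add_finrank_ker
  have h₂ := (LinearMap.range g).finrank_le
  omega

/-- The kernel of a matrix `M` with `n` columns has `|F| ^ (n - rank M)` elements. -/
theorem card_ker_mulVecLin {F : Type*} [Field F] [Finite F] {m n : ℕ}
    (M : Matrix (Fin m) (Fin n) F) :
    Nat.card (LinearMap.ker M.mulVecLin) = Nat.card F ^ (n - M.rank) := by
  rw [Module.natCard_eq_pow_finrank (K := F)]
  have h := M.mulVecLin.finrank_range_add_finrank_ker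
  rw [Module.finrank_fin_fun] at h
  congr 1
  rw [Matrix.rank]
  omega

/-- If `C ⊆ F^{m×n}` is a one-weight code of weight `d` and dimension `k`,
then `k ≤ m + n − d`. -/
theorem stmt14 {F : Type*} [Field F] [Fintype F] {m n k d : ℕ}
    (hm : 0 < m) (hn : 0 < n) (hk : 1 ≤ k) (hd : 1 ≤ d)
    (C : Submodule F (Matrix (Fin m) (Fin n) F))
    (hC : Module.finrank F C = k)
    (hone : ∀ M ∈ C, M ≠ 0 → M.rank = d) :
    k ≤ m + n - d := by
  classical
  have hcardC : Nat.card C = Nat.card F ^ k := hC ▸ Module.natCard_eq_pow_finrank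
  obtain ⟨e, he⟩ : ∃ e, n = d + e := by
    have hnt : Nontrivial C := Module.nontrivial_of_finrank_pos (R := F) (by omega)
    obtain ⟨M, hM⟩ := exists_ne (0 : C)
    have hrank := hone M M.2 (by simpa using hM)
    have hle := (M : Matrix (Fin m) (Fin n) F).rank_le_width
    exact ⟨n - d, by omega⟩
  by_contra! hlt
  let f : C →ₗ[F] (Fin n → F) →ₗ[F] (Fin m → F) := (Matrix.mulVecBilin F F).comp C.subtype
  have hcount : ∑ M : C, Nat.card (LinearMap.ker (f M)) =
      Nat.card F ^ n + (Nat.card F ^ k - 1) * Nat.card F ^ e := by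
    have hker (M : C) : Nat.card (LinearMap.ker (f M)) =
        Nat.card F ^ (n - (M : Matrix (Fin m) (Fin n) F).rank) :=
      card_ker_mulVecLin (M : Matrix (Fin m) (Fin n) F)
    rw [← Finset.add_sum_erase _ _ (Finset.mem_univ (0 : C)),
      Finset.sum_congr rfl (g := fun _ => Nat.card F ^ e), Finset.sum_const,
      Finset.card_erase_of_mem (Finset.mem_univ _), Finset.card_univ,
      ← Nat.card_eq_fintype_card, hcardC, smul_eq_mul, hker]
    · simp
    · intro M hM
      rw [hker, hone M M.2 (by simpa using Finset.ne_of_mem_erase hM), he,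
        Nat.add_sub_cancel_left]
  have hdvd : Nat.card F ^ (e + 1) ∣ ∑ M : C, Nat.card (LinearMap.ker (f M)) := by
    rw [sum_card_ker_eq_sum_card_ker_flip]
    refine Finset.dvd_sum fun x _ => (pow_dvd_pow _ ?_).trans
      (pow_finrank_sub_dvd_card_ker (f.flip x))
    rw [hC, Module.finrank_fin_fun]
    omega
  have hpos : 0 < Nat.card F := Nat.card_pos
  rw [hcount, he, pow_add _ d e, ← add_mul, mul_comm _ (Nat.card F ^ e), pow_succ,
    Nat.mul_dvd_mul_iff_left (pow_pos hpos e),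
    Nat.dvd_add_right (dvd_pow_self _ (by omega))] at hdvd
  have hone_dvd := (Nat.dvd_sub_iff_right (Nat.one_le_pow _ _ hpos)
    (dvd_pow_self (Nat.card F) (by omega : k ≠ 0))).1 hdvd
  have hcardF : 1 < Nat.card F := Finite.one_lt_card
  exact hcardF.ne' (Nat.dvd_one.1 hone_dvd)
end
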